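/- arXiv:2107.12062 — 3 statements merged into one kernel-verified Lean document; each statement's English description precedes it below -/
import Mathlib

section
/- (Peetre's Lemma.) Let $X$ and $Y$ be Banach spaces, let $T : Y \to X$ be a bounded injective linear operator, and let $R : Y \to X$ be a compact linear operator. Assume there is a constant $C>0$ such that $\|x\|_Y \le C\,(\|Tx\|_X + \|Rx\|_X)$ for all $x\in Y$. Then there exists a constant $C'>0$ such that $\|x\|_Y \le C'\,\|Tx\|_X$ for all $x\in Y$. -/
/-!
If no constant `C'` worked, there would be unit vectors `y n` with `T (y n) → 0`
and, by compactness of `R`, a subsequence along which `R (y n)` converges to some `a`. The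
hypothesis says that `x ↦ (T x, R x)` is bounded below, so its range is closed and `(0, a)` is
`(T z, R z)` for some `z`. Injectivity of `T` forces `z = 0`, hence `a = 0`, and the same estimate
then sends `‖y n‖ = 1` to zero along the subsequence.
-/

/-- Peetre's Lemma. Let `X` and `Y` be Banach spaces, `T : Y → X` a bounded injective
linear operator, `R : Y → X` a compact linear operator, and suppose
`‖x‖ ≤ C (‖Tx‖ + ‖Rx‖)` for all `x ∈ Y`. Then there is `C' > 0` with
`‖x‖ ≤ C' ‖Tx‖` for all `x ∈ Y`. -/
theorem peetre_lemma
    {X Y : Type*}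
    [NormedAddCommGroup X] [NormedSpace ℝ X] [CompleteSpace X]
    [NormedAddCommGroup Y] [NormedSpace ℝ Y] [CompleteSpace Y]
    (T : Y →L[ℝ] X) (hT_inj : Function.Injective T)
    (R : Y →L[ℝ] X) (hR_cpt : IsCompactOperator R)
    (C : ℝ) (hC : 0 < C)
    (hTR : ∀ x : Y, ‖x‖ ≤ C * (‖T x‖ + ‖R x‖)) :
    ∃ C' : ℝ, 0 < C' ∧ ∀ x : Y, ‖x‖ ≤ C' * ‖T x‖ := by
  by_contra! hcon
  have hunit : ∀ n : ℕ, ∃ y : Y, ‖y‖ = 1 ∧ ‖T y‖ ≤ 1 / ((n : ℝ) + 1) := by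
    intro n
    obtain ⟨x, hx⟩ := hcon ((n : ℝ) + 1) (by positivity)
    have hx0 : 0 < ‖x‖ := lt_of_le_of_lt (by positivity) hx
    refine ⟨‖x‖⁻¹ • x, ?_, ?_⟩
    · rw [norm_smul, norm_inv, norm_norm, inv_mul_cancel₀ hx0.ne']
    · rw [map_smul, norm_smul, norm_inv, norm_norm, inv_mul_le_iff₀ hx0, mul_one_div,
        le_div_iff₀ (by positivity), mul_comm]
      exact hx.le
  choose y hy1 hyT using hunit
  have hT0 : Filter.Tendsto (fun n => T (y n)) Filter.atTop (nhds 0) :=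
    squeeze_zero_norm hyT tendsto_one_div_add_atTop_nhds_zero_nat
  obtain ⟨K, hK, hRK⟩ := hR_cpt.image_closedBall_subset_compact (f := (R : Y →ₗ[ℝ] X)) 1
  obtain ⟨a, -, φ, hφ, hRa⟩ := hK.tendsto_subseq (x := fun n => R (y n))
    fun n => hRK ⟨y n, by simp [hy1 n], rfl⟩
  have hTφ := hT0.comp hφ.tendsto_atTop
  -- The factor 2 compares the sum of the two norms with the sup norm on `X × X`.
  have hanti : AntilipschitzWith (2 * C).toNNReal (T.prod R) := by
    refine ContinuousLinearMap.antilipschitz_of_bound _ fun x => ?_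
    rw [Real.coe_toNNReal _ (by positivity)]
    have h1 : ‖T x‖ ≤ ‖(T.prod R) x‖ := norm_fst_le ((T.prod R) x)
    have h2 : ‖R x‖ ≤ ‖(T.prod R) x‖ := norm_snd_le ((T.prod R) x)
    nlinarith [hTR x]
  have hclosed : IsClosed (Set.range (T.prod R)) :=
    hanti.isClosed_range (T.prod R).uniformContinuous
  obtain ⟨z, hz⟩ : ((0 : X), a) ∈ Set.range (T.prod R) :=
    hclosed.mem_of_tendsto (hTφ.prodMk_nhds hRa) (Filter.Eventually.of_forall fun n => ⟨y (φ n), rfl⟩)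
  have hTz : T z = 0 := congrArg Prod.fst hz
  have hRz : R z = a := congrArg Prod.snd hz
  have hz0 : z = 0 := hT_inj (by rw [hTz, map_zero])
  have ha : a = 0 := by rw [← hRz, hz0, map_zero]
  subst ha
  have hlim := (hTφ.norm.add hRa.norm).const_mul C
  have h1 := ge_of_tendsto' hlim fun n => (hy1 (φ n)).ge.trans (hTR (y (φ n)))
  norm_num at h1
end

section
/- Let $r\in\mathbb{N}^*$ and let $x : [0,1]\to\mathbb{C}$ be continuous. Define $y(s) := \int_s^1 (t-s)^{r-1}\Big(\int_0^t (t-\tau)^{r-1}x(\tau)\,\mathrm{d}\tau\Big)\mathrm{d}t$ for $s\in[0,1]$. Then $y$ is $2r$ times continuously differentiable on $[0,1]$, it satisfies $(-1)^r\,y^{(2r)}(s) = (r-1)!^2\,x(s)$ for all $s\in[0,1]$, and it satisfies the boundary conditions $y^{(k)}(1)=0$ for $0\le k\le r-1$ and $y^{(k)}(0)=0$ for $r\le k\le 2r-1$. -/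
/-!
Write `J a f t = ∫ τ in a..t, f τ`. Repeated integration by parts (Cauchy's formula) gives
`∫ τ in a..t, (t - τ) ^ n * f τ = n! * (J a)^[n + 1] f t`. Extending `x` from `[0,1]` to a
continuous function `X` on `ℝ` and applying this at the base points `0` and `1`, one finds on `[0,1]`
`y = (-1) ^ r * (r - 1)!² * (J 1)^[r] ((J 0)^[r] X)`.
By the fundamental theorem of calculus each derivative removes one `J`, and `J a f` vanishes at `a`;
regularity, the differential equation and all boundary conditions can be read off from this formula.
-/

open MeasureTheory

/-- The primitive of `f` that vanishes at `a`. -/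
noncomputable def primitiveFrom (a : ℝ) (f : ℝ → ℂ) : ℝ → ℂ := fun t => ∫ τ in a..t, f τ

lemma primitiveFrom_self (a : ℝ) (f : ℝ → ℂ) : primitiveFrom a f a = 0 := by
  simp [primitiveFrom]

lemma primitiveFrom_hasDerivAt (a : ℝ) {f : ℝ → ℂ} (hf : Continuous f) (t : ℝ) :
    HasDerivAt (primitiveFrom a f) (f t) t :=
  hf.integral_hasStrictDerivAt a t |>.hasDerivAt

lemma deriv_primitiveFrom (a : ℝ) {f : ℝ → ℂ} (hf : Continuous f) :
    deriv (primitiveFrom a f) = f :=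
  funext fun t => (primitiveFrom_hasDerivAt a hf t).deriv

lemma continuous_primitiveFrom (a : ℝ) {f : ℝ → ℂ} (hf : Continuous f) :
    Continuous (primitiveFrom a f) :=
  continuous_iff_continuousAt.2 fun t => (primitiveFrom_hasDerivAt a hf t).continuousAt

lemma continuous_iterate_primitiveFrom (a : ℝ) {f : ℝ → ℂ} (hf : Continuous f) (n : ℕ) :
    Continuous ((primitiveFrom a)^[n] f) := by
  induction n with
  | zero => exact hf
  | succ n ih =>
    rw [Function.iterate_succ_apply']
    exact continuous_primitiveFrom a ih

lemma contDiff_iterate_primitiveFrom (a : ℝ) {f : ℝ → ℂ} {m : ℕ} (hf : ContDiff ℝ m f) (n : ℕ) :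
    ContDiff ℝ ((m + n : ℕ)) ((primitiveFrom a)^[n] f) := by
  induction n with
  | zero => exact hf
  | succ n ih =>
    rw [Function.iterate_succ_apply', ← add_assoc, Nat.cast_succ, contDiff_succ_iff_deriv]
    refine ⟨fun t => (primitiveFrom_hasDerivAt a ih.continuous t).differentiableAt, ?_, ?_⟩
    · simp
    · rwa [deriv_primitiveFrom a ih.continuous]

lemma iterate_deriv_primitiveFrom (a : ℝ) {f : ℝ → ℂ} (hf : Continuous f) (k m : ℕ) :
    deriv^[k] ((primitiveFrom a)^[k + m] f) = (primitiveFrom a)^[m] f := by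
  induction k with
  | zero => simp
  | succ k ih =>
    rw [Function.iterate_succ_apply, show k + 1 + m = (k + m) + 1 by ring,
      Function.iterate_succ_apply',
      deriv_primitiveFrom a (continuous_iterate_primitiveFrom a hf _), ih]

/-- Cauchy's formula for repeated integration. -/
lemma integral_pow_mul_eq_iterate (a : ℝ) (n : ℕ) {f : ℝ → ℂ} (hf : Continuous f) (t : ℝ) :
    ∫ τ in a..t, (((t - τ) ^ n : ℝ) : ℂ) * f τ
      = (n.factorial : ℂ) * (primitiveFrom a)^[n + 1] f t := by
  induction n generalizing f with
  | zero => simp [primitiveFrom]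
  | succ n ih =>
    have hu : ∀ τ ∈ Set.uIcc a t, HasDerivAt (fun τ : ℝ => (((t - τ) ^ (n + 1) : ℝ) : ℂ))
        (((-((n + 1) * (t - τ) ^ n) : ℝ)) : ℂ) τ := by
      intro τ _
      have h := (((hasDerivAt_id τ).const_sub t).pow (n + 1)).ofReal_comp
      refine h.congr_deriv ?_
      simp only [Nat.add_sub_cancel, id]
      push_cast
      ring
    have hparts := intervalIntegral.integral_mul_deriv_eq_deriv_mul hu
      (fun τ _ => primitiveFrom_hasDerivAt a hf τ)
      (Continuous.intervalIntegrable (by fun_prop) _ _) (hf.intervalIntegrable _ _)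
    rw [hparts, Function.iterate_succ_apply, Nat.factorial_succ, Nat.cast_mul, mul_assoc,
      ← ih (continuous_primitiveFrom a hf), primitiveFrom_self,
      ← intervalIntegral.integral_const_mul]
    simp only [sub_self, ne_eq, Nat.succ_ne_zero, not_false_eq_true, zero_pow,
      Complex.ofReal_zero, zero_mul, mul_zero, zero_sub]
    rw [← intervalIntegral.integral_neg]
    congr 1
    ext τ
    push_cast
    ring

/-- Let `r ∈ ℕ*`, `x : [0,1] → ℂ` continuous and
`y(s) = ∫_s^1 (t-s)^(r-1) (∫_0^t (t-τ)^(r-1) x(τ) dτ) dt`, i.e. `y = S_r^* S_r x`.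
Then `y ∈ C^{2r}([0,1])`, `(-1)^r y^{(2r)} = (r-1)!² x` on `[0,1]`, and
`y⁽ᵏ⁾(1) = 0` for `0 ≤ k ≤ r-1`, `y⁽ᵏ⁾(0) = 0` for `r ≤ k ≤ 2r-1`. -/
theorem adjoint_abel_solves_polyharmonic (r : ℕ) (hr : 1 ≤ r)
    (x : ℝ → ℂ) (hx : ContinuousOn x (Set.Icc 0 1))
    (y : ℝ → ℂ)
    (hy : ∀ s : ℝ, y s =
      ∫ t in Set.Ioo s 1, (((t - s) ^ (r - 1) : ℝ) : ℂ) *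
        ∫ τ in Set.Ioo (0:ℝ) t, (((t - τ) ^ (r - 1) : ℝ) : ℂ) * x τ) :
    ContDiffOn ℝ (2 * r) y (Set.Icc 0 1)
    ∧ (∀ s ∈ Set.Icc (0:ℝ) 1,
        (-1 : ℂ) ^ r * iteratedDerivWithin (2 * r) y (Set.Icc 0 1) s
          = (((r - 1).factorial ^ 2 : ℕ) : ℂ) * x s)
    ∧ (∀ k : ℕ, k ≤ r - 1 → iteratedDerivWithin k y (Set.Icc 0 1) 1 = 0)
    ∧ (∀ k : ℕ, r ≤ k → k ≤ 2 * r - 1 → iteratedDerivWithin k y (Set.Icc 0 1) 0 = 0) := by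
  obtain ⟨p, rfl⟩ : ∃ p, r = p + 1 := ⟨r - 1, by omega⟩
  simp only [Nat.add_sub_cancel] at hy ⊢
  obtain ⟨X, hX, hXx⟩ : ∃ X : ℝ → ℂ, Continuous X ∧ ∀ t ∈ Set.Icc (0:ℝ) 1, X t = x t :=
    ⟨Set.IccExtend zero_le_one ((Set.Icc (0:ℝ) 1).domRestrict x), hx.domRestrict.Icc_extend',
      fun t ht => Set.IccExtend_of_mem _ _ ht⟩
  set Z : ℝ → ℂ := (primitiveFrom 0)^[p + 1] X with hZ
  have hZc : Continuous Z := continuous_iterate_primitiveFrom 0 hX _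
  set c : ℂ := (-1) ^ (p + 1) * (p.factorial : ℂ) ^ 2 with hc
  set Y : ℝ → ℂ := (primitiveFrom 1)^[p + 1] Z with hY
  have hyY : Set.EqOn y (fun s => c * Y s) (Set.Icc 0 1) := by
    intro s hs
    have hinner : ∀ t ∈ Set.Ioo s 1,
        (((t - s) ^ p : ℝ) : ℂ) * ∫ τ in Set.Ioo (0:ℝ) t, (((t - τ) ^ p : ℝ) : ℂ) * x τ
        = (((t - s) ^ p : ℝ) : ℂ) * ((p.factorial : ℂ) * Z t) := by
      intro t ht
      rw [hZ, ← integral_pow_mul_eq_iterate 0 p hX t,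
        intervalIntegral.integral_of_le (hs.1.trans ht.1.le), integral_Ioc_eq_integral_Ioo]
      congr 1
      refine setIntegral_congr_fun measurableSet_Ioo fun τ hτ => ?_
      simp only [hXx τ ⟨hτ.1.le, (hτ.2.trans ht.2).le⟩]
    rw [hy, setIntegral_congr_fun measurableSet_Ioo hinner, ← integral_Ioc_eq_integral_Ioo,
      ← intervalIntegral.integral_of_le hs.2, intervalIntegral.integral_symm]
    -- reversing `t - s` into `s - t` produces the sign `(-1) ^ p`
    have hrev : ∀ t : ℝ, (((t - s) ^ p : ℝ) : ℂ) * ((p.factorial : ℂ) * Z t)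
        = ((-1) ^ p * (p.factorial : ℂ)) * ((((s - t) ^ p : ℝ) : ℂ) * Z t) := by
      intro t
      have h : (t - s) ^ p = (-1) ^ p * (s - t) ^ p := by rw [← mul_pow]; ring
      rw [h]
      push_cast
      ring
    simp only [hrev]
    rw [intervalIntegral.integral_const_mul, integral_pow_mul_eq_iterate 1 p hZc s]
    simp only [hc, hY]
    ring
  have hYsmooth : ContDiff ℝ ((2 * (p + 1) : ℕ)) Y := by
    have h0 := contDiff_iterate_primitiveFrom 0 (m := 0) (contDiff_zero.2 hX) (p + 1)
    have h1 := contDiff_iterate_primitiveFrom 1 h0 (p + 1)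
    convert h1 using 2
    ring
  have hcY : ContDiff ℝ ((2 * (p + 1) : ℕ)) (fun s => c * Y s) := contDiff_const.mul hYsmooth
  have hD : ∀ k ≤ 2 * (p + 1), ∀ s ∈ Set.Icc (0:ℝ) 1,
      iteratedDerivWithin k y (Set.Icc 0 1) s = c * deriv^[k] Y s := by
    intro k hk s hs
    rw [iteratedDerivWithin_congr hyY hs,
      iteratedDerivWithin_eq_iteratedDeriv (uniqueDiffOn_Icc zero_lt_one)
        (hcY.contDiffAt.of_le (by exact_mod_cast hk)) hs,
      iteratedDeriv_const_mul_field, iteratedDeriv_eq_iterate]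
  have hlow : ∀ k ≤ p + 1, deriv^[k] Y = (primitiveFrom 1)^[p + 1 - k] Z := by
    intro k hk
    rw [← iterate_deriv_primitiveFrom 1 hZc k, Nat.add_sub_cancel' hk]
  have hhigh : ∀ j ≤ p + 1, deriv^[j + (p + 1)] Y = (primitiveFrom 0)^[p + 1 - j] X := by
    intro j hj
    rw [Function.iterate_add_apply, hlow _ le_rfl, Nat.sub_self, Function.iterate_zero_apply,
      ← iterate_deriv_primitiveFrom 0 hX j, Nat.add_sub_cancel' hj]
  refine ⟨?_, ?_, ?_, ?_⟩
  · have h := hcY.contDiffOn.congr hyY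
    exact_mod_cast h
  · intro s hs
    rw [hD _ le_rfl s hs, two_mul, hhigh _ le_rfl, Nat.sub_self, Function.iterate_zero_apply,
      hXx s hs, hc]
    have h1 : ((-1 : ℂ) ^ (p + 1)) * (-1) ^ (p + 1) = 1 := by rw [← mul_pow]; simp
    push_cast
    linear_combination ((p.factorial : ℂ) ^ 2 * x s) * h1
  · intro k hk
    rw [hD k (by omega) 1 (by simp), hlow k (by omega), show p + 1 - k = (p - k) + 1 by omega,
      Function.iterate_succ_apply', primitiveFrom_self, mul_zero]
  · intro k hk1 hk2
    obtain ⟨j, rfl⟩ : ∃ j, k = j + (p + 1) := ⟨k - (p + 1), by omega⟩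
    rw [hD _ (by omega) 0 (by simp), hhigh j (by omega), show p + 1 - j = (p - j) + 1 by omega,
      Function.iterate_succ_apply', primitiveFrom_self, mul_zero]
end

section
/- Let $(\mu_n)_{n\in\mathbb{N}}$ be positive reals, $0\le r<s$ reals, $\theta\in(0,1)$, and $(y_n)_{n\in\mathbb{N}}$ complex numbers with $\sum_n\mu_n^{2r}|y_n|^2<\infty$. For $t>0$ set $K(t,y)^2 := t^2\sum_n \mu_n^{2r}\,\frac{|y_n|^2}{1+t^2\mu_n^{2(r-s)}}$. Then $\int_0^{+\infty} t^{-(2\theta+1)}\,K(t,y)^2\,\mathrm{d}t = \frac{\pi}{2\sin(\pi\theta)}\,\sum_n \mu_n^{2((1-\theta)s+\theta r)}\,|y_n|^2$, where both sides may simultaneously equal $+\infty$. -/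
/-!
Everything in sight is nonnegative, so the sum over `n` may be pulled out of the integral (monotone
convergence) with no finiteness assumption on either side, and the identity reduces to one mode:
`∫_0^∞ t^(1-2θ) / (1 + c t²) dt = π / (2 sin (πθ)) * c^(θ-1)` for `c > 0`
(`lintegral_rpow_div_one_add_mul_sq`), used with `c = μ_n^(2(r-s))`.

For the one-mode integral, write `1 / (1 + c t²) = ∫_0^∞ exp (-(1 + c t²) x) dx` and exchange the
order of integration by Tonelli. The `t`-integral is then `(c x)^(θ-1) Γ(1-θ) / 2`, the remaining
`x`-integral is `Γ(θ)`, and Euler's reflection formula gives `Γ(θ) Γ(1-θ) = π / sin (πθ)`.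

The assumed summability of `μ_n^(2r) |y_n|²` guarantees that the real series defining `K(t,y)²`
converges, so that it agrees with the corresponding series in `[0,∞]`.
-/

open MeasureTheory Real

/-- The Laplace representation `1/a = ∫_0^∞ exp (-a x) dx`, as an integral in `[0,∞]`. -/
lemma lintegral_exp_neg_mul {a : ℝ} (ha : 0 < a) :
    ∫⁻ x in Set.Ioi (0:ℝ), ENNReal.ofReal (exp (-a * x)) = ENNReal.ofReal (1 / a) := by
  rw [← ofReal_integral_eq_lintegral_ofReal (integrableOn_exp_mul_Ioi (by linarith) 0)
    (Filter.Eventually.of_forall fun x => (exp_pos _).le), integral_exp_mul_Ioi (by linarith)]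
  simp [neg_div_neg_eq]

lemma lintegral_rpow_mul_exp_neg_mul_sq {θ b : ℝ} (hθ : θ < 1) (hb : 0 < b) :
    ∫⁻ t in Set.Ioi (0:ℝ), ENNReal.ofReal (t ^ (1 - 2 * θ) * exp (-b * t ^ 2))
      = ENNReal.ofReal (b ^ (θ - 1) * (1 / 2) * Gamma (1 - θ)) := by
  have hq : -1 < 1 - 2 * θ := by linarith
  have hint := integral_rpow_mul_exp_neg_mul_rpow (p := 2) two_pos hq hb
  simp only [rpow_two] at hint
  rw [← ofReal_integral_eq_lintegral_ofReal (integrableOn_rpow_mul_exp_neg_mul_sq hb hq), hint]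
  · congr 4 <;> ring
  · filter_upwards [ae_restrict_mem measurableSet_Ioi] with t ht
    have ht' : (0:ℝ) < t := ht
    positivity

lemma lintegral_exp_neg_mul_rpow {θ : ℝ} (hθ : 0 < θ) :
    ∫⁻ x in Set.Ioi (0:ℝ), ENNReal.ofReal (exp (-x) * x ^ (θ - 1)) = ENNReal.ofReal (Gamma θ) := by
  rw [Gamma_eq_integral hθ, ofReal_integral_eq_lintegral_ofReal (GammaIntegral_convergent hθ)]
  filter_upwards [ae_restrict_mem measurableSet_Ioi] with x hx
  have hx' : (0:ℝ) < x := hx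
  positivity

/-- The identity for a single mode. -/
lemma lintegral_rpow_div_one_add_mul_sq {θ c : ℝ} (hθ : θ ∈ Set.Ioo (0:ℝ) 1) (hc : 0 < c) :
    ∫⁻ t in Set.Ioi (0:ℝ), ENNReal.ofReal (t ^ (1 - 2 * θ) / (1 + t ^ 2 * c))
      = ENNReal.ofReal (π / (2 * sin (π * θ)) * c ^ (θ - 1)) := by
  calc
    _ = ∫⁻ t in Set.Ioi (0:ℝ), ∫⁻ x in Set.Ioi (0:ℝ),
          ENNReal.ofReal (t ^ (1 - 2 * θ) * exp (-(1 + t ^ 2 * c) * x)) := by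
      refine setLIntegral_congr_fun measurableSet_Ioi fun t ht => ?_
      have ht' : (0:ℝ) < t := ht
      have h0 : 0 ≤ t ^ (1 - 2 * θ) := by positivity
      simp only [ENNReal.ofReal_mul h0]
      rw [lintegral_const_mul' _ _ ENNReal.ofReal_ne_top,
        lintegral_exp_neg_mul (by positivity), ← ENNReal.ofReal_mul h0, mul_one_div]
    _ = ∫⁻ x in Set.Ioi (0:ℝ), ∫⁻ t in Set.Ioi (0:ℝ),
          ENNReal.ofReal (t ^ (1 - 2 * θ) * exp (-(1 + t ^ 2 * c) * x)) :=
      lintegral_lintegral_swap (by fun_prop)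
    _ = ∫⁻ x in Set.Ioi (0:ℝ), ENNReal.ofReal (c ^ (θ - 1) * (1 / 2) * Gamma (1 - θ)) *
          ENNReal.ofReal (exp (-x) * x ^ (θ - 1)) := by
      refine setLIntegral_congr_fun measurableSet_Ioi fun x hx => ?_
      have hx' : (0:ℝ) < x := hx
      have hG : 0 < Gamma (1 - θ) := Gamma_pos_of_pos (by linarith [hθ.2])
      have hsplit : ∀ t : ℝ, t ^ (1 - 2 * θ) * exp (-(1 + t ^ 2 * c) * x)
          = exp (-x) * (t ^ (1 - 2 * θ) * exp (-(c * x) * t ^ 2)) := fun t => by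
        rw [show -(1 + t ^ 2 * c) * x = -x + -(c * x) * t ^ 2 by ring, exp_add]
        ring
      simp only [hsplit, ENNReal.ofReal_mul (exp_pos (-x)).le]
      rw [lintegral_const_mul' _ _ ENNReal.ofReal_ne_top,
        lintegral_rpow_mul_exp_neg_mul_sq hθ.2 (mul_pos hc hx'),
        ← ENNReal.ofReal_mul (exp_pos _).le, ← ENNReal.ofReal_mul (exp_pos _).le,
        ← ENNReal.ofReal_mul (by positivity), mul_rpow hc.le hx'.le]
      congr 1
      ring
    _ = ENNReal.ofReal (π / (2 * sin (π * θ)) * c ^ (θ - 1)) := by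
      have hG : 0 < Gamma (1 - θ) := Gamma_pos_of_pos (by linarith [hθ.2])
      rw [lintegral_const_mul' _ _ ENNReal.ofReal_ne_top, lintegral_exp_neg_mul_rpow hθ.1,
        ← ENNReal.ofReal_mul (by positivity)]
      congr 1
      have hrefl := Gamma_mul_Gamma_one_sub θ
      calc _ = c ^ (θ - 1) * (1 / 2) * (Gamma θ * Gamma (1 - θ)) := by ring
        _ = _ := by rw [hrefl, mul_comm 2, ← div_div]; ring

/-- Spectral-model form of the interpolation identity `[X_s, X_r]_θ ≈ X_{(1-θ)s+θr}`:
for positive `μ_n`, reals `0 ≤ r < s`, `θ ∈ (0,1)` and `(y_n)` with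
`∑ μ_n^{2r}|y_n|² < ∞`, setting `K(t,y)² = t² ∑ μ_n^{2r}|y_n|²/(1+t²μ_n^{2(r-s)})`,
`∫_0^∞ t^{-(2θ+1)} K(t,y)² dt = (π/(2 sin(πθ))) ∑ μ_n^{2((1-θ)s+θr)}|y_n|²`,
where both sides may simultaneously be `+∞`. -/
theorem K_functional_interpolation_integral
    (μ : ℕ → ℝ) (hμ : ∀ n, 0 < μ n)
    (r s : ℝ) (hr : 0 ≤ r) (hrs : r < s)
    (θ : ℝ) (hθ : θ ∈ Set.Ioo (0:ℝ) 1)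
    (y : ℕ → ℂ) (hy : Summable fun n => μ n ^ (2 * r) * ‖y n‖ ^ 2) :
    ∫⁻ t in Set.Ioi (0:ℝ),
        ENNReal.ofReal (t ^ (-(2 * θ + 1)) *
          (t ^ 2 * ∑' n : ℕ, μ n ^ (2 * r) * ‖y n‖ ^ 2 / (1 + t ^ 2 * μ n ^ (2 * (r - s)))))
      = ENNReal.ofReal (π / (2 * Real.sin (π * θ))) *
          ∑' n : ℕ, ENNReal.ofReal (μ n ^ (2 * ((1 - θ) * s + θ * r)) * ‖y n‖ ^ 2) := by
  have hsin : 0 < sin (π * θ) :=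
    sin_pos_of_pos_of_lt_pi (mul_pos pi_pos hθ.1) (by nlinarith [pi_pos, hθ.2])
  have hμr : ∀ n (a : ℝ), 0 < μ n ^ a := fun n a => rpow_pos_of_pos (hμ n) a
  have hpt : ∀ t ∈ Set.Ioi (0:ℝ),
      ENNReal.ofReal (t ^ (-(2 * θ + 1)) *
          (t ^ 2 * ∑' n : ℕ, μ n ^ (2 * r) * ‖y n‖ ^ 2 / (1 + t ^ 2 * μ n ^ (2 * (r - s)))))
        = ∑' n : ℕ, ENNReal.ofReal (μ n ^ (2 * r) * ‖y n‖ ^ 2) *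
            ENNReal.ofReal (t ^ (1 - 2 * θ) / (1 + t ^ 2 * μ n ^ (2 * (r - s)))) := by
    intro t ht
    have ht' : (0:ℝ) < t := ht
    have hden : ∀ n, 0 < 1 + t ^ 2 * μ n ^ (2 * (r - s)) := fun n => by
      have := hμr n (2 * (r - s))
      positivity
    have hnum : ∀ n, 0 ≤ μ n ^ (2 * r) * ‖y n‖ ^ 2 := fun n => by
      have := hμr n (2 * r)
      positivity
    have hsum : Summable fun n =>
        μ n ^ (2 * r) * ‖y n‖ ^ 2 / (1 + t ^ 2 * μ n ^ (2 * (r - s))) := by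
      refine hy.of_nonneg_of_le (fun n => div_nonneg (hnum n) (hden n).le)
        fun n => div_le_self (hnum n) ?_
      have := hμr n (2 * (r - s))
      exact le_add_of_nonneg_right (by positivity)
    have hpow : t ^ (-(2 * θ + 1)) * t ^ 2 = t ^ (1 - 2 * θ) := by
      rw [← rpow_two, ← rpow_add ht']
      congr 1
      ring
    rw [← mul_assoc, hpow, ENNReal.ofReal_mul (by positivity),
      ENNReal.ofReal_tsum_of_nonneg (fun n => div_nonneg (hnum n) (hden n).le) hsum,
      ← ENNReal.tsum_mul_left]
    refine tsum_congr fun n => ?_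
    rw [← ENNReal.ofReal_mul (by positivity), ← ENNReal.ofReal_mul (hnum n)]
    congr 1
    ring
  rw [setLIntegral_congr_fun measurableSet_Ioi hpt, lintegral_tsum (fun n => by fun_prop),
    ← ENNReal.tsum_mul_left]
  refine tsum_congr fun n => ?_
  have h1 := hμr n (2 * r)
  rw [lintegral_const_mul' _ _ ENNReal.ofReal_ne_top,
    lintegral_rpow_div_one_add_mul_sq hθ (hμr n _), ← ENNReal.ofReal_mul (by positivity),
    ← ENNReal.ofReal_mul (by positivity), ← rpow_mul (hμ n).le,
    show 2 * ((1 - θ) * s + θ * r) = 2 * r + 2 * (r - s) * (θ - 1) by ring, rpow_add (hμ n)]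
  congr 1
  ring
end
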